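/- At side length a = π/3 the vertex patterns (3,3,4,4) and (3,4,6) both have angle defect zero: 4·arcsin(√3/3) + 4·arcsin(√6/3) = 2π and 2·arcsin(√3/3) + 2·arcsin(√6/3) + π = 2π. Consequently a_c((3,3,4,4)) = a_c((3,4,6)) = π/3. -/

import Mathlib

/-- The angle defect `K_a(p) = 2π − Σ_{f ∈ p} 2·arcsin(cos(π/f)/cos(a/2))` of a
vertex pattern given as a list. -/
noncomputable def K (p : List ℕ) (a : ℝ) : ℝ :=
  2 * Real.pi -
    (p.map (fun f => 2 * Real.arcsin (Real.cos (Real.pi / (f : ℝ)) / Real.cos (a / 2)))).sum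

/-- The critical side-length `a_c(p) = max{a ∈ [0, 2π/f_N] : K_a(p) ≥ 0}` of a
vertex pattern, where `f_N` is the last (largest) entry. -/
noncomputable def ac (p : List ℕ) : ℝ :=
  sSup {a : ℝ | a ∈ Set.Icc 0 (2 * Real.pi / (p.getLast! : ℝ)) ∧ 0 ≤ K p a}

/-!
For `3 ≤ f`, as the side length `a` grows on `[0, 2π/f]` the ratio `cos(π/f)/cos(a/2)` increases
strictly and stays in `[0, 1]`, so the angle defect is strictly decreasing on `[0, 2π/f_N]` and a
zero of it there is the critical side length. At `a = π/3` the ratios for `f = 3, 4` are `√3/3` and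
`√6/3`, whose squares add up to `1`, so their arcsines are complementary; the hexagon has
degenerated to a great circle, with interior angle `π`. Hence both defects vanish.
-/

open Real Set

lemma arcsin_add_arcsin_of_sq_add_sq_eq_one {x y : ℝ} (hx : 0 ≤ x) (hy : 0 ≤ y)
    (hxy : x ^ 2 + y ^ 2 = 1) : arcsin x + arcsin y = π / 2 := by
  have hy_eq : √(1 - x ^ 2) = y := by rw [← hxy, add_sub_cancel_left, sqrt_sq hy]
  rw [← hy_eq, ← arccos_eq_arcsin hx, arccos, add_sub_cancel]

lemma cos_pi_div_pos {x : ℝ} (hx : 2 < x) : 0 < cos (π / x) := by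
  have hlt : π / x < π / 2 := div_lt_div_of_pos_left pi_pos two_pos hx
  have hpos : 0 < π / x := div_pos pi_pos (two_pos.trans hx)
  exact cos_pos_of_mem_Ioo ⟨by linarith [pi_pos], hlt⟩

/-- The interior angle `2·arcsin(cos(π/f)/cos(a/2))` of the regular spherical `f`-gon of side
length `a`, the contribution of one face to the angle defect `K`. It is geometrically meaningful
for `3 ≤ f` and `0 < a ≤ 2π/f`. -/
noncomputable def interiorAngle (f : ℕ) (a : ℝ) : ℝ :=
  2 * arcsin (cos (π / f) / cos (a / 2))

section InteriorAngle

variable {f : ℕ}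

lemma interiorAngle_two_pi_div (hf : 3 ≤ f) : interiorAngle f (2 * π / f) = π := by
  have hhalf : 2 * π / f / 2 = π / f := by ring
  rw [interiorAngle, hhalf, div_self (cos_pi_div_pos (mod_cast hf)).ne', arcsin_one]
  ring

lemma strictMonoOn_interiorAngle (hf : 3 ≤ f) :
    StrictMonoOn (interiorAngle f) (Icc 0 (2 * π / f)) := by
  intro a ⟨ha, _⟩ b ⟨_, hb⟩ hab
  have hf_pos : 0 < cos (π / f) := cos_pi_div_pos (mod_cast hf)
  have hb_half : b / 2 ≤ π / f := by linarith [show 2 * π / f = 2 * (π / f) by ring]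
  have hf_le : π / f ≤ π := div_le_self pi_pos.le (mod_cast (by lia : 1 ≤ f))
  have hcos_le : cos (π / f) ≤ cos (b / 2) :=
    cos_le_cos_of_nonneg_of_le_pi (by linarith) hf_le hb_half
  have hcos_lt : cos (b / 2) < cos (a / 2) :=
    cos_lt_cos_of_nonneg_of_le_pi (by linarith) (by linarith) (by linarith)
  have hb_pos : 0 < cos (b / 2) := hf_pos.trans_le hcos_le
  have ha_ratio : 0 < cos (π / f) / cos (a / 2) := div_pos hf_pos (hb_pos.trans hcos_lt)
  have hratio : cos (π / f) / cos (a / 2) < cos (π / f) / cos (b / 2) :=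
    div_lt_div_of_pos_left hf_pos hb_pos hcos_lt
  exact mul_lt_mul_of_pos_left
    (arcsin_lt_arcsin (by linarith) hratio ((div_le_one hb_pos).mpr hcos_le)) two_pos

end InteriorAngle

-- Not `rfl`: the ascription `(f : ℝ)` in `K` makes `f` real, so `p` itself is coerced to `List ℝ`.
lemma K_eq_two_pi_sub_sum_interiorAngle (p : List ℕ) (a : ℝ) :
    K p a = 2 * π - (p.map (interiorAngle · a)).sum := by
  simp only [K, interiorAngle, List.bind_eq_flatMap, List.pure_def,
    ← List.map_eq_flatMap, List.map_map, Function.comp_def]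

section AngleDefect

variable {p : List ℕ}

lemma strictAntiOn_K {n : ℕ} (hp : p ≠ []) (hp_ge : ∀ f ∈ p, 3 ≤ f) (hp_le : ∀ f ∈ p, f ≤ n) :
    StrictAntiOn (K p) (Icc 0 (2 * π / n)) := by
  intro a ha b hb hab
  rw [K_eq_two_pi_sub_sum_interiorAngle, K_eq_two_pi_sub_sum_interiorAngle]
  refine sub_lt_sub_left (List.sum_lt_sum_of_ne_nil hp _ _ fun f hf ↦ ?_) _
  have hf_pos : (0 : ℝ) < f := mod_cast (by decide : 0 < 3).trans_le (hp_ge f hf)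
  have hsub : Icc 0 (2 * π / n) ⊆ Icc 0 (2 * π / f) :=
    Icc_subset_Icc_right (div_le_div_of_nonneg_left two_pi_pos.le hf_pos
      (mod_cast hp_le f hf))
  exact strictMonoOn_interiorAngle (hp_ge f hf) (hsub ha) (hsub hb) hab

lemma ac_eq_of_K_eq_zero {a : ℝ} (hp_ge : ∀ f ∈ p, 3 ≤ f) (hp_le : ∀ f ∈ p, f ≤ p.getLast!)
    (ha : a ∈ Icc 0 (2 * π / p.getLast!)) (hK : K p a = 0) : ac p = a := by
  have hp : p ≠ [] := by
    rintro rfl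
    simp [K, pi_ne_zero] at hK
  refine IsGreatest.csSup_eq ⟨⟨ha, hK.ge⟩, fun b ⟨hb, hKb⟩ ↦ ?_⟩
  exact ((strictAntiOn_K hp hp_ge hp_le).le_iff_ge ha hb).mp (hK.trans_le hKb)

end AngleDefect

lemma arcsin_sqrt_three_div_three_add_arcsin_sqrt_six_div_three :
    arcsin (√3 / 3) + arcsin (√6 / 3) = π / 2 :=
  arcsin_add_arcsin_of_sq_add_sq_eq_one (by positivity) (by positivity) (by norm_num [div_pow])

lemma cos_pi_div_three_div_two : cos (π / 3 / 2) = √3 / 2 := by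
  rw [show π / 3 / 2 = π / 6 by ring, cos_pi_div_six]

lemma interiorAngle_three_pi_div_three : interiorAngle 3 (π / 3) = 2 * arcsin (√3 / 3) := by
  have hratio : 1 / 2 / (√3 / 2) = √3 / 3 := by
    field_simp
    norm_num
  rw [interiorAngle, Nat.cast_ofNat, cos_pi_div_three, cos_pi_div_three_div_two, hratio]

lemma interiorAngle_four_pi_div_three : interiorAngle 4 (π / 3) = 2 * arcsin (√6 / 3) := by
  have hsqrt : √6 = √2 * √3 := by rw [← sqrt_mul zero_le_two]; norm_num
  have hratio : √2 / 2 / (√3 / 2) = √6 / 3 := by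
    rw [hsqrt]
    field_simp
    norm_num
  rw [interiorAngle, Nat.cast_ofNat, cos_pi_div_four, cos_pi_div_three_div_two, hratio]

lemma interiorAngle_six_pi_div_three : interiorAngle 6 (π / 3) = π := by
  have hside : π / 3 = 2 * π / (6 : ℕ) := by
    push_cast
    ring
  rw [hside, interiorAngle_two_pi_div (by decide)]

lemma K_three_three_four_four_pi_div_three : K [3, 3, 4, 4] (π / 3) = 0 := by
  simp only [K_eq_two_pi_sub_sum_interiorAngle, List.map_cons, List.map_nil, List.sum_cons,
    List.sum_nil, interiorAngle_three_pi_div_three, interiorAngle_four_pi_div_three]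
  linarith [arcsin_sqrt_three_div_three_add_arcsin_sqrt_six_div_three]

lemma K_three_four_six_pi_div_three : K [3, 4, 6] (π / 3) = 0 := by
  simp only [K_eq_two_pi_sub_sum_interiorAngle, List.map_cons, List.map_nil, List.sum_cons,
    List.sum_nil, interiorAngle_three_pi_div_three, interiorAngle_four_pi_div_three,
    interiorAngle_six_pi_div_three]
  linarith [arcsin_sqrt_three_div_three_add_arcsin_sqrt_six_div_three]

/-- At side length π/3 the patterns (3,3,4,4) and (3,4,6) both have angle defect
zero: 4·arcsin(√3/3) + 4·arcsin(√6/3) = 2π and 2·arcsin(√3/3) + 2·arcsin(√6/3) + π = 2π.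
Consequently a_c((3,3,4,4)) = a_c((3,4,6)) = π/3. -/
theorem stmt11 :
    4 * Real.arcsin (Real.sqrt 3 / 3) + 4 * Real.arcsin (Real.sqrt 6 / 3) = 2 * Real.pi ∧
    2 * Real.arcsin (Real.sqrt 3 / 3) + 2 * Real.arcsin (Real.sqrt 6 / 3) + Real.pi
      = 2 * Real.pi ∧
    K [3, 3, 4, 4] (Real.pi / 3) = 0 ∧ K [3, 4, 6] (Real.pi / 3) = 0 ∧
    ac [3, 3, 4, 4] = Real.pi / 3 ∧ ac [3, 4, 6] = Real.pi / 3 := by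
  have hsum := arcsin_sqrt_three_div_three_add_arcsin_sqrt_six_div_three
  have hK₁ := K_three_three_four_four_pi_div_three
  have hK₂ := K_three_four_six_pi_div_three
  have hside₁ : π / 3 ∈ Icc 0 (2 * π / (4 : ℕ)) :=
    ⟨by positivity, by push_cast; linarith [pi_pos]⟩
  have hside₂ : π / 3 ∈ Icc 0 (2 * π / (6 : ℕ)) :=
    ⟨by positivity, by push_cast; linarith [pi_pos]⟩
  exact ⟨by linarith, by linarith, hK₁, hK₂,
    ac_eq_of_K_eq_zero (by decide) (by decide) hside₁ hK₁,
    ac_eq_of_K_eq_zero (by decide) (by decide) hside₂ hK₂⟩
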